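/- arXiv:1810.04815 — 7 statements merged into one kernel-verified Lean document; each statement's English description precedes it below -/
import Mathlib

section
/- For a finite MDP with a stationary deterministic policy π : S → A, any state x ∈ S, and any n : ℕ, the expected discounted reward over length-n trajectories started at x equals the n-fold iterate of the policy evaluation operator applied to the zero function: ∑_{ω : Fin (n+1) → S, ω 0 = x} (∏_{i : Fin n} P (π (ω i)) (ω i) (ω (i+1))) * (∑_{i : Fin n} γ^i * R (π (ω i)) (ω i) (ω (i+1))) = (T_π^[n] 0)(x), where T_π^[n] denotes the n-th iterate of T_π and 0 is the zero function. -/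
/-! The proof is by induction on `n`, uniformly in the starting state, by conditioning on the first
transition. A trajectory of length `n + 1` from `x` is `Fin.cons x ω` for a trajectory `ω` of length
`n` from some successor state `y` (`sum_filter_zero_eq_succ`). Its weight is `P x y` times the weight
of `ω`, and its discounted reward is `R x y` plus `γ` times that of `ω`. As the weights of the
trajectories from `y` sum to one (`sum_pathWeight`), summing over `ω` gives
`P x y * (R x y + γ * f y)`, where `f` is the expected reward over `n` steps, and summing over `y`
gives the policy evaluation operator applied to `f`. -/

/-- Summing over trajectories from `x` amounts to summing over the successor state `y` and the
remaining trajectory from `y`. -/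
lemma sum_filter_zero_eq_succ {S : Type*} [Fintype S] [DecidableEq S] {n : ℕ} (x : S)
    (F : (Fin (n + 2) → S) → ℝ) :
    ∑ ω ∈ Finset.univ.filter (fun ω : Fin (n + 2) → S => ω 0 = x), F ω
      = ∑ y, ∑ ω ∈ Finset.univ.filter (fun ω : Fin (n + 1) → S => ω 0 = y),
          F (Fin.cons x ω : Fin (n + 2) → S) := by
  rw [Finset.sum_fiberwise]
  refine Finset.sum_bij' (fun ω _ => Fin.tail ω) (fun ω _ => (Fin.cons x ω : Fin (n + 2) → S))
    ?_ ?_ ?_ ?_ ?_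
  · simp
  · simp
  · intro ω hω
    obtain rfl := (Finset.mem_filter.1 hω).2
    exact Fin.cons_self_tail ω
  · intro ω _
    exact Fin.tail_cons (α := fun _ => S) x ω
  · intro ω hω
    obtain rfl := (Finset.mem_filter.1 hω).2
    exact congrArg F (Fin.cons_self_tail ω).symm

/-- The product of the transition weights `p` along the trajectory `ω`. -/
def pathWeight {S : Type*} (p : S → S → ℝ) {n : ℕ} (ω : Fin (n + 1) → S) : ℝ :=
  ∏ i : Fin n, p (ω i.castSucc) (ω i.succ)

/-- The discounted sum of the rewards `r` along the trajectory `ω`. -/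
def pathReward {S : Type*} (r : S → S → ℝ) (γ : ℝ) {n : ℕ} (ω : Fin (n + 1) → S) : ℝ :=
  ∑ i : Fin n, γ ^ (i : ℕ) * r (ω i.castSucc) (ω i.succ)

lemma pathWeight_cons {S : Type*} (p : S → S → ℝ) {n : ℕ} (x : S) (ω : Fin (n + 1) → S) :
    pathWeight p (Fin.cons x ω : Fin (n + 2) → S) = p x (ω 0) * pathWeight p ω := by
  simp [pathWeight, Fin.prod_univ_succ, ← Fin.succ_castSucc]

lemma pathReward_cons {S : Type*} (r : S → S → ℝ) (γ : ℝ) {n : ℕ} (x : S)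
    (ω : Fin (n + 1) → S) :
    pathReward r γ (Fin.cons x ω : Fin (n + 2) → S) = r x (ω 0) + γ * pathReward r γ ω := by
  unfold pathReward
  rw [Fin.sum_univ_succ, Finset.mul_sum]
  simp [← Fin.succ_castSucc, pow_succ', mul_assoc]

/-- The trajectories from a fixed state have total probability one. -/
lemma sum_pathWeight {S : Type*} [Fintype S] [DecidableEq S] (p : S → S → ℝ)
    (hp : ∀ x, ∑ y, p x y = 1) (n : ℕ) (x : S) :
    ∑ ω ∈ Finset.univ.filter (fun ω : Fin (n + 1) → S => ω 0 = x), pathWeight p ω = 1 := by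
  induction n generalizing x with
  | zero =>
    simp only [pathWeight, Finset.univ_eq_empty, Finset.prod_empty, Finset.sum_const,
      nsmul_eq_mul, mul_one]
    have : Finset.univ.filter (fun ω : Fin (0 + 1) → S => ω 0 = x) = {fun _ => x} := by
      ext ω
      simp [funext_iff]
    simp [this]
  | succ n ih =>
    rw [sum_filter_zero_eq_succ, ← hp x]
    refine Finset.sum_congr rfl fun y _ => ?_
    rw [← mul_one (p x y), ← ih y, Finset.mul_sum]
    refine Finset.sum_congr rfl fun ω hω => ?_
    rw [pathWeight_cons, (Finset.mem_filter.1 hω).2]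

/-- The theorem for the Markov chain with kernel `p` and rewards `r` that a policy induces. -/
lemma sum_pathWeight_mul_pathReward {S : Type*} [Fintype S] [DecidableEq S] (p r : S → S → ℝ)
    (γ : ℝ) (hp : ∀ x, ∑ y, p x y = 1) (n : ℕ) (x : S) :
    ∑ ω ∈ Finset.univ.filter (fun ω : Fin (n + 1) → S => ω 0 = x),
        pathWeight p ω * pathReward r γ ω
      = ((fun f : S → ℝ => fun z => ∑ y, p z y * (r z y + γ * f y))^[n] (0 : S → ℝ)) x := by
  induction n generalizing x with
  | zero => simp [pathReward]
  | succ n ih =>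
    rw [sum_filter_zero_eq_succ, Function.iterate_succ_apply']
    refine Finset.sum_congr rfl fun y _ => ?_
    -- The reward of the first step is averaged against total weight one.
    rw [← ih y, ← mul_one (r x y), ← sum_pathWeight p hp n y, Finset.mul_sum, Finset.mul_sum,
      ← Finset.sum_add_distrib, Finset.mul_sum]
    refine Finset.sum_congr rfl fun ω hω => ?_
    rw [pathWeight_cons, pathReward_cons, (Finset.mem_filter.1 hω).2]
    ring

/-- For a finite MDP with a stationary deterministic policy `π`, the expected
discounted reward over length-`n` trajectories started at `x` equals the `n`-fold
iterate of the policy evaluation operator applied to the zero function. -/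
theorem expected_discounted_reward_eq_iterate_policyEval
    {S A : Type*} [Fintype S] [Nonempty S] [DecidableEq S] [Fintype A] [Nonempty A]
    (P R : A → S → S → ℝ) (γ : ℝ)
    (hP0 : ∀ a x y, 0 ≤ P a x y) (hP1 : ∀ a x, ∑ y, P a x y = 1)
    (π : S → A) (x : S) (n : ℕ) :
    ∑ ω ∈ Finset.univ.filter (fun ω : Fin (n + 1) → S => ω 0 = x),
        (∏ i : Fin n, P (π (ω i.castSucc)) (ω i.castSucc) (ω i.succ)) *
          (∑ i : Fin n, γ ^ (i : ℕ) * R (π (ω i.castSucc)) (ω i.castSucc) (ω i.succ))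
      = ((fun f : S → ℝ => fun z => ∑ y, P (π z) z y * (R (π z) z y + γ * f y))^[n]
          (0 : S → ℝ)) x := by
  exact sum_pathWeight_mul_pathReward (fun x y => P (π x) x y) (fun x y => R (π x) x y) γ
    (fun x => hP1 (π x) x) n x
end

section
/- For a finite MDP, the optimal finite-horizon values satisfy the Bellman recursion: for every n : ℕ and every state x ∈ S, V*_{n+1}(x) = max_{a ∈ A} ∑_{y ∈ S} P a x y * (R a x y + γ * V*_n(y)), i.e. V*_{n+1} = T V*_n where T is the Bellman optimality operator. -/
/-!
The mathematical point is that one policy sequence is optimal from every state simultaneously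
(`exists_uniformly_optimal`): prepend a greedy decision rule, chosen state by state, to a
uniformly optimal sequence for the shorter horizon. Since `P` and `γ` are nonnegative, the one-step
backup is monotone in the continuation value, so nothing beats this sequence. Hence each supremum
over policy sequences is attained, and the optimal value at horizon `n + 1` is the greedy one-step
backup of the optimal value at horizon `n`.
-/

/-- Horizon-`n` value of a policy sequence `π : ℕ → S → A`. -/
noncomputable def Vhor {S A : Type*} [Fintype S] (P R : A → S → S → ℝ) (γ : ℝ) :
    ℕ → (ℕ → S → A) → S → ℝ
  | 0, _, _ => 0
  | n + 1, π, x =>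
      ∑ y, P (π 0 x) x y * (R (π 0 x) x y + γ * Vhor P R γ n (fun i => π (i + 1)) y)

theorem backup_mono {S A : Type*} [Fintype S] (P R : A → S → S → ℝ) (γ : ℝ) (hγ : 0 ≤ γ)
    (hP0 : ∀ a x y, 0 ≤ P a x y) {f g : S → ℝ} (h : ∀ y, f y ≤ g y) (a : A) (x : S) :
    ∑ y, P a x y * (R a x y + γ * f y) ≤ ∑ y, P a x y * (R a x y + γ * g y) :=
  Finset.sum_le_sum fun y _ => mul_le_mul_of_nonneg_left
    (add_le_add_right (mul_le_mul_of_nonneg_left (h y) hγ) _) (hP0 a x y)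

/-- If `σ` is optimal from every state at horizon `n`, then prepending a decision rule `d` that is
greedy for the value of `σ` gives a sequence optimal from every state at horizon `n + 1`. -/
theorem greedy_cons_optimal {S A : Type*} [Fintype S]
    (P R : A → S → S → ℝ) (γ : ℝ) (hγ : 0 ≤ γ) (hP0 : ∀ a x y, 0 ≤ P a x y)
    {n : ℕ} {σ : ℕ → S → A} (hσ : ∀ π x, Vhor P R γ n π x ≤ Vhor P R γ n σ x)
    {d : S → A}
    (hd : ∀ x a, ∑ y, P a x y * (R a x y + γ * Vhor P R γ n σ y) ≤
      ∑ y, P (d x) x y * (R (d x) x y + γ * Vhor P R γ n σ y))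
    (π : ℕ → S → A) (x : S) :
    Vhor P R γ (n + 1) π x ≤ Vhor P R γ (n + 1) (fun i => Nat.casesOn i d σ) x :=
  (backup_mono P R γ hγ hP0 (hσ _) (π 0 x) x).trans (hd x (π 0 x))

theorem exists_greedy {S A : Type*} [Fintype S] [Finite A] [Nonempty A]
    (P R : A → S → S → ℝ) (γ : ℝ) (f : S → ℝ) :
    ∃ d : S → A, ∀ x a, ∑ y, P a x y * (R a x y + γ * f y) ≤
      ∑ y, P (d x) x y * (R (d x) x y + γ * f y) :=
  Classical.skolem.1 fun x => Finite.exists_max fun a => ∑ y, P a x y * (R a x y + γ * f y)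

theorem exists_uniformly_optimal {S A : Type*} [Fintype S] [Finite A] [Nonempty A]
    (P R : A → S → S → ℝ) (γ : ℝ) (hγ : 0 ≤ γ) (hP0 : ∀ a x y, 0 ≤ P a x y) (n : ℕ) :
    ∃ σ : ℕ → S → A, ∀ π x, Vhor P R γ n π x ≤ Vhor P R γ n σ x := by
  induction n with
  | zero => exact ⟨fun _ _ => Classical.arbitrary A, fun _ _ => le_rfl⟩
  | succ n ih =>
    obtain ⟨σ, hσ⟩ := ih
    obtain ⟨d, hd⟩ := exists_greedy P R γ (Vhor P R γ n σ)
    exact ⟨_, greedy_cons_optimal P R γ hγ hP0 hσ hd⟩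

theorem iSup_Vhor_eq {S A : Type*} [Fintype S] (P R : A → S → S → ℝ) (γ : ℝ)
    {n : ℕ} {σ : ℕ → S → A} (hσ : ∀ π x, Vhor P R γ n π x ≤ Vhor P R γ n σ x) (x : S) :
    ⨆ π : ℕ → S → A, Vhor P R γ n π x = Vhor P R γ n σ x :=
  haveI : Nonempty (ℕ → S → A) := ⟨σ⟩
  IsLUB.ciSup_eq
    ⟨Set.forall_mem_range.2 fun π => hσ π x, fun _ hb => hb (Set.mem_range_self σ)⟩

/-- Bellman recursion for the optimal finite-horizon values:
`V*_{n+1} = T V*_n` where `T` is the Bellman optimality operator. -/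
theorem optimal_finite_horizon_bellman_recursion
    {S A : Type*} [Fintype S] [Nonempty S] [Fintype A] [Nonempty A]
    (P R : A → S → S → ℝ) (γ : ℝ) (hγ : 0 ≤ γ)
    (hP0 : ∀ a x y, 0 ≤ P a x y) (hP1 : ∀ a x, ∑ y, P a x y = 1)
    (n : ℕ) (x : S) :
    (⨆ π : ℕ → S → A, Vhor P R γ (n + 1) π x)
      = Finset.univ.sup' Finset.univ_nonempty
          (fun a : A =>
            ∑ y, P a x y * (R a x y + γ * ⨆ π : ℕ → S → A, Vhor P R γ n π y)) := by
  obtain ⟨σ, hσ⟩ := exists_uniformly_optimal P R γ hγ hP0 n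
  obtain ⟨d, hd⟩ := exists_greedy P R γ (Vhor P R γ n σ)
  rw [iSup_Vhor_eq P R γ (greedy_cons_optimal P R γ hγ hP0 hσ hd)]
  simp only [iSup_Vhor_eq P R γ hσ]
  -- By definition the left-hand side is the backup under the greedy action `d x`.
  exact le_antisymm
    (Finset.le_sup' (fun a => ∑ y, P a x y * (R a x y + γ * Vhor P R γ n σ y))
      (Finset.mem_univ (d x)))
    (Finset.sup'_le _ _ fun a _ => hd x a)
end

section
/- For a finite MDP with 0 ≤ γ < 1, the Bellman optimality equation has a unique solution: there exists a unique function V* : S → ℝ such that for all x ∈ S, V*(x) = max_{a ∈ A} ∑_{y ∈ S} P a x y * (R a x y + γ * V*(y)). -/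
/-!
The Bellman operator is a contraction with constant `γ` for the sup norm on `S → ℝ`. If `g` is
within `d` of `f` at every state, then changing `f` into `g` changes each action's expected
discounted value by at most `γ * d`, because the transition probabilities sum to one; a finite
maximum then changes by at most `γ * d` too (`bellman_le_add`). Since `S → ℝ` is complete, the
Banach fixed point theorem gives exactly one fixed point.
-/

/-- Bellman optimality operator `T`. -/
noncomputable def bellman {S A : Type*} [Fintype S] [Fintype A] [Nonempty A]
    (P R : A → S → S → ℝ) (γ : ℝ) (f : S → ℝ) (x : S) : ℝ :=
  Finset.univ.sup' Finset.univ_nonempty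
    (fun a : A => ∑ y, P a x y * (R a x y + γ * f y))

/-- One-sided form of the contraction estimate; exchanging `f` and `g` gives the other side. -/
theorem bellman_le_add {S A : Type*} [Fintype S] [Fintype A] [Nonempty A]
    (P R : A → S → S → ℝ) (γ : ℝ) (hγ0 : 0 ≤ γ)
    (hP0 : ∀ a x y, 0 ≤ P a x y) (hP1 : ∀ a x, ∑ y, P a x y = 1)
    (f g : S → ℝ) (d : ℝ) (h : ∀ y, f y ≤ g y + d) (x : S) :
    bellman P R γ f x ≤ bellman P R γ g x + γ * d := by
  refine Finset.sup'_le _ _ fun a _ => ?_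
  calc ∑ y, P a x y * (R a x y + γ * f y)
      ≤ ∑ y, P a x y * (R a x y + γ * (g y + d)) := by
        refine Finset.sum_le_sum fun y _ => mul_le_mul_of_nonneg_left ?_ (hP0 a x y)
        linarith [mul_le_mul_of_nonneg_left (h y) hγ0]
    _ = ∑ y, (P a x y * (R a x y + γ * g y) + P a x y * (γ * d)) :=
        Finset.sum_congr rfl fun y _ => by ring
    _ = ∑ y, P a x y * (R a x y + γ * g y) + γ * d := by
        rw [Finset.sum_add_distrib, ← Finset.sum_mul, hP1, one_mul]
    _ ≤ bellman P R γ g x + γ * d := by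
        have := Finset.le_sup' (fun a : A => ∑ y, P a x y * (R a x y + γ * g y))
          (Finset.mem_univ a)
        exact add_le_add_left this _

theorem contractingWith_bellman {S A : Type*} [Fintype S] [Fintype A] [Nonempty A]
    (P R : A → S → S → ℝ) (γ : ℝ) (hγ0 : 0 ≤ γ) (hγ1 : γ < 1)
    (hP0 : ∀ a x y, 0 ≤ P a x y) (hP1 : ∀ a x, ∑ y, P a x y = 1) :
    ContractingWith ⟨γ, hγ0⟩ (bellman P R γ) := by
  refine ⟨hγ1, LipschitzWith.of_dist_le_mul fun f g => ?_⟩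
  change _ ≤ γ * dist f g
  refine (dist_pi_le_iff (mul_nonneg hγ0 dist_nonneg)).2 fun x => ?_
  have hd : ∀ y, |f y - g y| ≤ dist f g := fun y => dist_le_pi_dist f g y
  have h1 := bellman_le_add P R γ hγ0 hP0 hP1 f g (dist f g)
    (fun y => by linarith [(abs_le.1 (hd y)).2]) x
  have h2 := bellman_le_add P R γ hγ0 hP0 hP1 g f (dist f g)
    (fun y => by linarith [(abs_le.1 (hd y)).1]) x
  rw [Real.dist_eq, abs_le]
  constructor <;> linarith

/-- For a finite MDP with `0 ≤ γ < 1`, the Bellman optimality equation has a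
unique solution. -/
theorem bellman_optimality_equation_unique_solution
    {S A : Type*} [Fintype S] [Nonempty S] [Fintype A] [Nonempty A]
    (P R : A → S → S → ℝ) (γ : ℝ) (hγ0 : 0 ≤ γ) (hγ1 : γ < 1)
    (hP0 : ∀ a x y, 0 ≤ P a x y) (hP1 : ∀ a x, ∑ y, P a x y = 1) :
    ∃! V : S → ℝ, ∀ x : S, V x = bellman P R γ V x := by
  have hT := contractingWith_bellman P R γ hγ0 hγ1 hP0 hP1
  refine ⟨hT.fixedPoint, fun x => (congrFun hT.fixedPoint_isFixedPt x).symm, fun V hV => ?_⟩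
  exact hT.fixedPoint_unique (funext fun x => (hV x).symm)
end

section
/- For a finite MDP with 0 ≤ γ < 1, suppose V* : S → ℝ satisfies the Bellman optimality equation T V* = V*, and π : S → A is a stationary deterministic policy whose value V_π : S → ℝ satisfies the policy evaluation equation T_π V_π = V_π. Then V_π(x) ≤ V*(x) for every x ∈ S; i.e. no stationary deterministic policy achieves value exceeding the solution of the Bellman optimality equation. -/
/-!
A maximum principle: the optimality operator dominates the evaluation operator of every policy, so
at a state `m` maximizing the gap `d = Vpi m - Vstar m`, comparing the two fixed-point equations
bounds `d` by `γ` times an average of gaps under the probability vector `P (π m) m`, hence by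
`γ * d`. As `γ < 1`, the largest gap is nonpositive.
-/

/-- Policy evaluation operator `T_π`. -/
noncomputable def polEval {S A : Type*} [Fintype S]
    (P R : A → S → S → ℝ) (γ : ℝ) (π : S → A) (f : S → ℝ) (x : S) : ℝ :=
  ∑ y, P (π x) x y * (R (π x) x y + γ * f y)

/-- No stationary deterministic policy achieves value exceeding the solution
of the Bellman optimality equation. -/
theorem policy_value_le_bellman_fixed_point
    {S A : Type*} [Fintype S] [Nonempty S] [Fintype A] [Nonempty A]
    (P R : A → S → S → ℝ) (γ : ℝ) (hγ0 : 0 ≤ γ) (hγ1 : γ < 1)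
    (hP0 : ∀ a x y, 0 ≤ P a x y) (hP1 : ∀ a x, ∑ y, P a x y = 1)
    (Vstar : S → ℝ) (hVstar : bellman P R γ Vstar = Vstar)
    (π : S → A) (Vpi : S → ℝ) (hVpi : polEval P R γ π Vpi = Vpi) :
    ∀ x : S, Vpi x ≤ Vstar x := by
  obtain ⟨m, -, hm⟩ :=
    Finset.exists_max_image Finset.univ (fun x => Vpi x - Vstar x) Finset.univ_nonempty
  have hstar : ∑ y, P (π m) m y * (R (π m) m y + γ * Vstar y) ≤ Vstar m := by
    conv_rhs => rw [← hVstar]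
    exact Finset.le_sup' (fun a : A => ∑ y, P a m y * (R a m y + γ * Vstar y))
      (Finset.mem_univ (π m))
  have hpi : ∑ y, P (π m) m y * (R (π m) m y + γ * Vpi y) = Vpi m := congrFun hVpi m
  have hsum : ∑ y, P (π m) m y * (R (π m) m y + γ * Vpi y)
      ≤ ∑ y, (P (π m) m y * (R (π m) m y + γ * Vstar y)
        + P (π m) m y * (γ * (Vpi m - Vstar m))) := by
    refine Finset.sum_le_sum fun y hy => ?_
    have h := mul_le_mul_of_nonneg_left
      (mul_le_mul_of_nonneg_left (hm y hy) hγ0) (hP0 (π m) m y)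
    linarith
  rw [Finset.sum_add_distrib, ← Finset.sum_mul, hP1, one_mul] at hsum
  -- The maximal gap `d` satisfies `d ≤ γ * d` with `γ < 1`, so `d ≤ 0`.
  have hgap : Vpi m - Vstar m ≤ 0 := by nlinarith
  intro x
  have := hm x (Finset.mem_univ x)
  linarith
end

section
/- Existence of a deterministic optimal stationary policy: for a finite MDP with 0 ≤ γ < 1, let V* : S → ℝ be a solution of the Bellman optimality equation T V* = V*. Then there exists a stationary deterministic policy π : S → A such that for every x ∈ S, π x attains the maximum in (T V*)(x), i.e. T_π V* = V*, and consequently the unique fixed point V_π of T_π equals V*. -/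
/-- `T_π` contracts the sup distance by the factor `γ`, stated through an arbitrary uniform
bound `c` on `|f - g|`. -/
theorem abs_polEval_sub_le {S A : Type*} [Fintype S]
    (P R : A → S → S → ℝ) (γ : ℝ) (hγ0 : 0 ≤ γ)
    (hP0 : ∀ a x y, 0 ≤ P a x y) (hP1 : ∀ a x, ∑ y, P a x y = 1)
    (π : S → A) (f g : S → ℝ) (c : ℝ) (hc : ∀ y, |f y - g y| ≤ c) (x : S) :
    |polEval P R γ π f x - polEval P R γ π g x| ≤ γ * c := by
  have h : polEval P R γ π f x - polEval P R γ π g x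
      = ∑ y, P (π x) x y * (γ * (f y - g y)) := by
    unfold polEval
    rw [← Finset.sum_sub_distrib]
    exact Finset.sum_congr rfl fun y _ => by ring
  rw [h]
  calc |∑ y, P (π x) x y * (γ * (f y - g y))|
      ≤ ∑ y, |P (π x) x y * (γ * (f y - g y))| := Finset.abs_sum_le_sum_abs _ _
    _ ≤ ∑ y, P (π x) x y * (γ * c) := by
        refine Finset.sum_le_sum fun y _ => ?_
        rw [abs_mul, abs_mul, abs_of_nonneg (hP0 _ _ _), abs_of_nonneg hγ0]
        exact mul_le_mul_of_nonneg_left (mul_le_mul_of_nonneg_left (hc y) hγ0) (hP0 _ _ _)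
    _ = γ * c := by rw [← Finset.sum_mul, hP1, one_mul]

/-- Existence of a deterministic optimal stationary policy: there is a policy
`π` greedy with respect to `V*` (i.e. `T_π V* = V*`), and the unique fixed
point of `T_π` equals `V*`. -/
theorem exists_deterministic_optimal_stationary_policy
    {S A : Type*} [Fintype S] [Nonempty S] [Fintype A] [Nonempty A]
    (P R : A → S → S → ℝ) (γ : ℝ) (hγ0 : 0 ≤ γ) (hγ1 : γ < 1)
    (hP0 : ∀ a x y, 0 ≤ P a x y) (hP1 : ∀ a x, ∑ y, P a x y = 1)
    (Vstar : S → ℝ) (hVstar : bellman P R γ Vstar = Vstar) :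
    ∃ π : S → A,
      (∀ x : S, polEval P R γ π Vstar x = bellman P R γ Vstar x) ∧
      polEval P R γ π Vstar = Vstar ∧
      (∀ W : S → ℝ, polEval P R γ π W = W → W = Vstar) := by
  have hgreedy : ∀ x, ∃ a, bellman P R γ Vstar x = ∑ y, P a x y * (R a x y + γ * Vstar y) :=
    fun x => by
      obtain ⟨a, -, ha⟩ := Finset.exists_mem_eq_sup' (Finset.univ_nonempty (α := A))
        (fun a : A => ∑ y, P a x y * (R a x y + γ * Vstar y))
      exact ⟨a, ha⟩
  choose π hπ using hgreedy
  have hfix : polEval P R γ π Vstar = Vstar := by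
    funext x
    exact (hπ x).symm.trans (congrFun hVstar x)
  refine ⟨π, fun x => (hπ x).symm, hfix, fun W hW => ?_⟩
  obtain ⟨x₀, hx₀⟩ := Finite.exists_max fun x => |W x - Vstar x|
  have hcontr := abs_polEval_sub_le P R γ hγ0 hP0 hP1 π W Vstar _ hx₀ x₀
  rw [hW, hfix] at hcontr
  have hmax : |W x₀ - Vstar x₀| ≤ 0 := by
    nlinarith [abs_nonneg (W x₀ - Vstar x₀)]
  funext x
  exact sub_eq_zero.mp (abs_nonpos_iff.mp ((hx₀ x).trans hmax))
end

section
/- For a finite MDP with 0 ≤ γ < 1, let V* : S → ℝ be the unique solution of T V* = V*, and for each stationary deterministic policy π : S → A let V_π : S → ℝ be the unique solution of T_π V_π = V_π. Then for every x ∈ S, V*(x) = max over all π : S → A of V_π(x), the maximum over the nonempty finite set of functions S → A. -/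
/-- Comparison principle: sub-fixed points of `T_π` lie below super-fixed points. -/
theorem le_of_le_polEval_of_polEval_le {S A : Type*} [Fintype S]
    (P R : A → S → S → ℝ) (γ : ℝ) (hγ0 : 0 ≤ γ) (hγ1 : γ < 1)
    (hP0 : ∀ a x y, 0 ≤ P a x y) (hP1 : ∀ a x, ∑ y, P a x y = 1)
    (π : S → A) (f g : S → ℝ) (hf : ∀ x, f x ≤ polEval P R γ π f x)
    (hg : ∀ x, polEval P R γ π g x ≤ g x) (x : S) : f x ≤ g x := by
  have : Nonempty S := ⟨x⟩
  obtain ⟨z, hz⟩ := Finite.exists_max (fun y => f y - g y)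
  have key : polEval P R γ π f z ≤ polEval P R γ π g z + γ * (f z - g z) := by
    calc polEval P R γ π f z
        ≤ ∑ y, (P (π z) z y * (R (π z) z y + γ * g y) + P (π z) z y * (γ * (f z - g z))) := by
          refine Finset.sum_le_sum fun y _ => ?_
          rw [← mul_add]
          refine mul_le_mul_of_nonneg_left ?_ (hP0 _ _ _)
          have := mul_le_mul_of_nonneg_left (hz y) hγ0
          linarith
      _ = polEval P R γ π g z + γ * (f z - g z) := by
          rw [Finset.sum_add_distrib, ← Finset.sum_mul, hP1, one_mul, polEval]
  have h1 := hf z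
  have h2 := hg z
  have h3 := hz x
  have h4 : f z - g z ≤ 0 := by nlinarith
  linarith

/-- The fixed point of the Bellman optimality operator is the maximum, over all
stationary deterministic policies, of the policies' values. -/
theorem bellman_fixed_point_eq_max_policy_value
    {S A : Type*} [Fintype S] [Nonempty S] [DecidableEq S] [Fintype A] [Nonempty A]
    (P R : A → S → S → ℝ) (γ : ℝ) (hγ0 : 0 ≤ γ) (hγ1 : γ < 1)
    (hP0 : ∀ a x y, 0 ≤ P a x y) (hP1 : ∀ a x, ∑ y, P a x y = 1)
    (Vstar : S → ℝ) (hVstar : bellman P R γ Vstar = Vstar)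
    (Vpol : (S → A) → S → ℝ)
    (hVpol : ∀ π : S → A, polEval P R γ π (Vpol π) = Vpol π) :
    ∀ x : S, Vstar x
      = Finset.univ.sup' Finset.univ_nonempty (fun π : S → A => Vpol π x) := by
  intro x
  apply le_antisymm
  · have hgreedy : ∀ z, ∃ a : A,
        bellman P R γ Vstar z = ∑ y, P a z y * (R a z y + γ * Vstar y) := fun z => by
      obtain ⟨a, _, ha⟩ := Finset.exists_mem_eq_sup' (s := (Finset.univ : Finset A))
        Finset.univ_nonempty (fun a : A => ∑ y, P a z y * (R a z y + γ * Vstar y))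
      exact ⟨a, ha⟩
    choose π hπ using hgreedy
    refine le_trans ?_ (Finset.le_sup' (fun π : S → A => Vpol π x) (Finset.mem_univ π))
    refine le_of_le_polEval_of_polEval_le P R γ hγ0 hγ1 hP0 hP1 π _ _ (fun z => ?_)
      (fun z => (congrFun (hVpol π) z).le) x
    exact ((congrFun hVstar z).symm.trans (hπ z)).le
  · refine Finset.sup'_le _ _ fun π _ => ?_
    refine le_of_le_polEval_of_polEval_le P R γ hγ0 hγ1 hP0 hP1 π _ _
      (fun z => (congrFun (hVpol π) z).ge) (fun z => ?_) x
    refine le_trans ?_ (congrFun hVstar z).le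
    exact Finset.le_sup' (fun a : A => ∑ y, P a z y * (R a z y + γ * Vstar y))
      (Finset.mem_univ (π z))
end

section
/- Deterministic policies are optimal among stochastic policies: for a finite MDP with 0 ≤ γ < 1, let μ : S → A → ℝ be a stochastic policy, i.e. μ x a ≥ 0 for all x, a and ∑_{a ∈ A} μ x a = 1 for all x, and define the operator T_μ : (S → ℝ) → (S → ℝ) by (T_μ f)(x) = ∑_{a ∈ A} μ x a * ∑_{y ∈ S} P a x y * (R a x y + γ * f y). If V_μ : S → ℝ satisfies T_μ V_μ = V_μ and V* : S → ℝ satisfies T V* = V*, then V_μ(x) ≤ V*(x) for all x ∈ S. -/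
/-- Evaluation operator `T_μ` of a stochastic policy `μ`. -/
noncomputable def stochEval {S A : Type*} [Fintype S] [Fintype A]
    (P R : A → S → S → ℝ) (γ : ℝ) (μ : S → A → ℝ) (f : S → ℝ) (x : S) : ℝ :=
  ∑ a, μ x a * ∑ y, P a x y * (R a x y + γ * f y)

/-- Deterministic policies are optimal among stochastic policies: the value of
any stochastic policy is dominated by the solution of the Bellman optimality
equation. -/
theorem stochastic_policy_value_le_bellman_fixed_point
    {S A : Type*} [Fintype S] [Nonempty S] [Fintype A] [Nonempty A]
    (P R : A → S → S → ℝ) (γ : ℝ) (hγ0 : 0 ≤ γ) (hγ1 : γ < 1)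
    (hP0 : ∀ a x y, 0 ≤ P a x y) (hP1 : ∀ a x, ∑ y, P a x y = 1)
    (μ : S → A → ℝ) (hμ0 : ∀ x a, 0 ≤ μ x a) (hμ1 : ∀ x, ∑ a, μ x a = 1)
    (Vmu : S → ℝ) (hVmu : stochEval P R γ μ Vmu = Vmu)
    (Vstar : S → ℝ) (hVstar : bellman P R γ Vstar = Vstar) :
    ∀ x : S, Vmu x ≤ Vstar x := by
  obtain ⟨x₀, hx₀⟩ := Finite.exists_max (fun x => Vmu x - Vstar x)
  have backup_le : ∀ a, ∑ y, P a x₀ y * (R a x₀ y + γ * Vmu y)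
      ≤ Vstar x₀ + γ * (Vmu x₀ - Vstar x₀) := by
    intro a
    have greedy : ∑ y, P a x₀ y * (R a x₀ y + γ * Vstar y) ≤ Vstar x₀ := by
      conv_rhs => rw [← hVstar]
      exact Finset.le_sup' (fun a : A => ∑ y, P a x₀ y * (R a x₀ y + γ * Vstar y))
        (Finset.mem_univ a)
    calc ∑ y, P a x₀ y * (R a x₀ y + γ * Vmu y)
        ≤ ∑ y, (P a x₀ y * (R a x₀ y + γ * Vstar y)
            + P a x₀ y * (γ * (Vmu x₀ - Vstar x₀))) := by
          refine Finset.sum_le_sum fun y _ => ?_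
          rw [← mul_add]
          refine mul_le_mul_of_nonneg_left ?_ (hP0 a x₀ y)
          linarith [mul_le_mul_of_nonneg_left (hx₀ y) hγ0]
      _ = ∑ y, P a x₀ y * (R a x₀ y + γ * Vstar y) + γ * (Vmu x₀ - Vstar x₀) := by
          rw [Finset.sum_add_distrib, ← Finset.sum_mul, hP1, one_mul]
      _ ≤ Vstar x₀ + γ * (Vmu x₀ - Vstar x₀) := by linarith
  have average_le : Vmu x₀ ≤ Vstar x₀ + γ * (Vmu x₀ - Vstar x₀) := by
    calc Vmu x₀ = ∑ a, μ x₀ a * ∑ y, P a x₀ y * (R a x₀ y + γ * Vmu y) :=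
          (congrFun hVmu x₀).symm
      _ ≤ ∑ a, μ x₀ a * (Vstar x₀ + γ * (Vmu x₀ - Vstar x₀)) :=
          Finset.sum_le_sum fun a _ => mul_le_mul_of_nonneg_left (backup_le a) (hμ0 x₀ a)
      _ = Vstar x₀ + γ * (Vmu x₀ - Vstar x₀) := by
          rw [← Finset.sum_mul, hμ1, one_mul]
  have max_nonpos : Vmu x₀ - Vstar x₀ ≤ 0 := by
    by_contra! h
    nlinarith [mul_pos (sub_pos.mpr hγ1) h]
  intro x
  linarith [hx₀ x]
end
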